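/- The function Ψ₆ = P₀³ − 9P₀(P₁² + P₂² + P₃² − 4P₄²) + 54P₁P₂P₃ does NOT belong to the ℂ-linear span of the set of products θ⁴[δᵢ]θ⁴[δⱼ]θ⁴[δₖ], where δᵢ, δⱼ, δₖ range over the ten even characteristics subject to the condition that the componentwise mod-2 sum δᵢ+δⱼ+δₖ is an odd characteristic. -/

import Mathlib

open scoped BigOperators

namespace TwoLoop

/-- 2×2 complex matrices. -/
abbrev Mat2 := Matrix (Fin 2) (Fin 2) ℂ

/-- The genus-2 Siegel upper half space: symmetric 2×2 complex matrices with
positive definite imaginary part. -/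
def SiegelH2 : Set Mat2 := {τ | τ.transpose = τ ∧ (τ.map Complex.im).PosDef}

/-- A (half-integer) theta characteristic `[a;b]`, recorded by its rows `a, b ∈ {0,1}²`. -/
abbrev Char := (Fin 2 → ℤ) × (Fin 2 → ℤ)

/-- The theta constant `θ[a;b](τ) = Σ_{n ∈ ℤ²} exp(πi (n+a/2)ᵀ τ (n+a/2) + πi (n+a/2)·b)`. -/
noncomputable def theta (κ : Char) (τ : Mat2) : ℂ :=
  ∑' n : Fin 2 → ℤ,
    Complex.exp ((Real.pi : ℂ) * Complex.I *
      ((∑ i, ∑ j, ((n i : ℂ) + (κ.1 i : ℂ) / 2) * τ i j * ((n j : ℂ) + (κ.1 j : ℂ) / 2))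
        + ∑ i, ((n i : ℂ) + (κ.1 i : ℂ) / 2) * (κ.2 i : ℂ)))

/-- The ten even characteristics δ₁,…,δ₁₀. -/
def δev : Fin 10 → Char :=
  ![(![0,0], ![0,0]), (![0,0], ![0,1]), (![0,0], ![1,0]), (![0,0], ![1,1]),
    (![0,1], ![0,0]), (![0,1], ![1,0]), (![1,0], ![0,0]), (![1,0], ![0,1]),
    (![1,1], ![0,0]), (![1,1], ![1,1])]

/-- The six odd characteristics ν₁,…,ν₆. -/
def νodd : Fin 6 → Char :=
  ![(![0,1], ![0,1]), (![1,0], ![1,0]), (![0,1], ![1,1]),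
    (![1,0], ![1,1]), (![1,1], ![0,1]), (![1,1], ![1,0])]

/-- `Θ[ε](τ) = θ[ε;0](2τ)`. -/
noncomputable def Θf (ε : Fin 2 → ℤ) (τ : Mat2) : ℂ := theta (ε, ![0,0]) ((2 : ℂ) • τ)

noncomputable def P0 (τ : Mat2) : ℂ :=
  Θf ![0,0] τ ^ 4 + Θf ![0,1] τ ^ 4 + Θf ![1,0] τ ^ 4 + Θf ![1,1] τ ^ 4
noncomputable def P1 (τ : Mat2) : ℂ :=
  2 * (Θf ![0,0] τ ^ 2 * Θf ![0,1] τ ^ 2 + Θf ![1,0] τ ^ 2 * Θf ![1,1] τ ^ 2)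
noncomputable def P2 (τ : Mat2) : ℂ :=
  2 * (Θf ![0,0] τ ^ 2 * Θf ![1,0] τ ^ 2 + Θf ![0,1] τ ^ 2 * Θf ![1,1] τ ^ 2)
noncomputable def P3 (τ : Mat2) : ℂ :=
  2 * (Θf ![0,0] τ ^ 2 * Θf ![1,1] τ ^ 2 + Θf ![0,1] τ ^ 2 * Θf ![1,0] τ ^ 2)
noncomputable def P4 (τ : Mat2) : ℂ :=
  4 * (Θf ![0,0] τ * Θf ![0,1] τ * Θf ![1,0] τ * Θf ![1,1] τ)

/-- The vector `(P₀,…,P₄)`. -/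
noncomputable def Pv : Fin 5 → Mat2 → ℂ := ![P0, P1, P2, P3, P4]

open MvPolynomial in
/-- The Igusa quartic as a polynomial in `x₀,…,x₄`. -/
noncomputable def I4poly : MvPolynomial (Fin 5) ℂ :=
  X 4 ^ 4 + X 4 ^ 2 * X 0 ^ 2 - X 4 ^ 2 * X 1 ^ 2 - X 4 ^ 2 * X 2 ^ 2 - X 4 ^ 2 * X 3 ^ 2
    + X 1 ^ 2 * X 2 ^ 2 + X 1 ^ 2 * X 3 ^ 2 + X 2 ^ 2 * X 3 ^ 2
    - 2 * (X 0 * X 1 * X 2 * X 3)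

/-- The signature `⟨κ|λ⟩ = exp(πi(a_κ·b_λ − b_κ·a_λ))`. -/
noncomputable def sig (κ lam : Char) : ℂ :=
  Complex.exp ((Real.pi : ℂ) * Complex.I *
    (((∑ i, κ.1 i * lam.2 i : ℤ) : ℂ) - ((∑ i, κ.2 i * lam.1 i : ℤ) : ℂ)))

/-- Componentwise mod-2 sum of characteristics. -/
def addChar (κ lam : Char) : Char :=
  (fun i => (κ.1 i + lam.1 i) % 2, fun i => (κ.2 i + lam.2 i) % 2)

/-- For each even characteristic `δ_d`, the ordering `(k₁,…,k₆)` of `{1,…,6}` (0-indexed) whose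
first three entries form the triad of odd characteristics with `δ_d = ν_{k₁}+ν_{k₂}+ν_{k₃}`
and whose last three are the complementary indices. -/
def triad : Fin 10 → Fin 6 → Fin 6 :=
  ![![0,3,5,1,2,4], ![0,1,5,2,3,4], ![0,1,4,2,3,5], ![0,3,4,1,2,5], ![0,1,3,2,4,5],
    ![0,4,5,1,2,3], ![0,1,2,3,4,5], ![0,2,3,1,4,5], ![0,2,5,1,3,4], ![0,2,4,1,3,5]]

/-- D'Hoker–Phong's `Ξ₆[δ]`. -/
noncomputable def Xi6 (d : Fin 10) (τ : Mat2) : ℂ :=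
  ∑ i : Fin 3, ∑ j : Fin 3,
    if i < j then
      sig (νodd (triad d (Fin.castLE (by norm_num) i))) (νodd (triad d (Fin.castLE (by norm_num) j))) *
        ∏ m : Fin 3,
          theta (addChar (addChar (νodd (triad d (Fin.castLE (by norm_num) i)))
              (νodd (triad d (Fin.castLE (by norm_num) j))))
            (νodd (triad d (⟨m.1 + 3, by omega⟩ : Fin 6)))) τ ^ 4
    else 0

/-- The formal derivative `∂I₄/∂θ⁴[δ]` of the Igusa quartic with respect to the ten fourth
powers of the even theta constants, regarded as independent variables. -/
noncomputable def Dd (d : Fin 10) (τ : Mat2) : ℂ :=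
  (1 / 48 : ℂ) *
    (theta (δev d) τ ^ 4 * (∑ d' : Fin 10, theta (δev d') τ ^ 8) - 4 * theta (δev d) τ ^ 12)

/-- `f_δ = 2Ξ₆[δ] − ∂I₄/∂θ⁴[δ]`. -/
noncomputable def fδ (d : Fin 10) (τ : Mat2) : ℂ := 2 * Xi6 d τ - Dd d τ

/-- `Ψ₆`, the weight-6 modular form. -/
noncomputable def Ψ6 (τ : Mat2) : ℂ :=
  P0 τ ^ 3 - 9 * P0 τ * (P1 τ ^ 2 + P2 τ ^ 2 + P3 τ ^ 2 - 4 * P4 τ ^ 2)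
    + 54 * (P1 τ * P2 τ * P3 τ)

/-- `Ψ₁₀`, the weight-10 modular form. -/
noncomputable def Ψ10 (τ : Mat2) : ℂ := ∏ d : Fin 10, theta (δev d) τ ^ 2

/-- A characteristic is even when `a·b` is even. -/
def IsEvenChar (κ : Char) : Prop := (∑ i, κ.1 i * κ.2 i) % 2 = 0

/-- A characteristic is odd when `a·b` is odd. -/
def IsOddChar (κ : Char) : Prop := (∑ i, κ.1 i * κ.2 i) % 2 = 1


/-!
Along the ray `τ = i s · 1`, `s → ∞`, a theta constant `θ[a;b]` is a sum of unimodular phases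
damped by `exp (-π s |n + a/2|²)`, so it tends to `1` when `a` is even and to `0` otherwise. If
`δᵢ + δⱼ + δₖ` is odd, then one of the three upper rows is not even, so the product
`θ⁴[δᵢ]θ⁴[δⱼ]θ⁴[δₖ]` tends to `0`, and with it every element of the span. But `P₀ → 1` and
`P₁, …, P₄ → 0`, so `Ψ₆ → 1`.
-/

open Filter Topology

theorem tendsto_tsum_exp_neg_mul_smul {ι E : Type*} [NormedAddCommGroup E] [NormedSpace ℝ E]
    [CompleteSpace E] {c : ι → ℝ} {w : ι → E} (hc : ∀ i, 0 ≤ c i)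
    (hw : Summable fun i => Real.exp (-c i) * ‖w i‖) :
    Tendsto (fun s : ℝ => ∑' i, Real.exp (-(c i * s)) • w i) atTop
      (𝓝 (∑' i, if c i = 0 then w i else 0)) := by
  refine tendsto_tsum_of_dominated_convergence hw (fun i => ?_) ?_
  · split_ifs with h
    · simp [h]
    · have hci : 0 < c i := (hc i).lt_of_ne' h
      have hexp : Tendsto (fun s : ℝ => Real.exp (-(c i * s))) atTop (𝓝 0) :=
        Real.tendsto_exp_neg_atTop_nhds_zero.comp (tendsto_id.const_mul_atTop hci)
      simpa using hexp.smul_const (w i)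
  · filter_upwards [eventually_ge_atTop 1] with s hs i
    rw [norm_smul, Real.norm_of_nonneg (Real.exp_pos _).le]
    gcongr
    exact le_mul_of_one_le_right (hc i) hs

/-- The squared length `|n + a/2|²` governing the decay of the `n`-th term of `θ[a;b]`. -/
noncomputable def shiftedNormSq (a n : Fin 2 → ℤ) : ℝ := ∑ i, ((n i : ℝ) + a i / 2) ^ 2

/-- The factor `exp (πi (n + a/2)·b)` of the `n`-th term of `θ[a;b]`, which is independent
of `τ`. -/
noncomputable def thetaPhase (κ : Char) (n : Fin 2 → ℤ) : ℂ :=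
  Complex.exp ((Real.pi * ∑ i, ((n i : ℝ) + κ.1 i / 2) * κ.2 i : ℝ) * Complex.I)

theorem shiftedNormSq_nonneg (a n : Fin 2 → ℤ) : 0 ≤ shiftedNormSq a n :=
  Finset.sum_nonneg fun _ _ => sq_nonneg _

theorem shiftedNormSq_eq_zero_iff {a n : Fin 2 → ℤ} :
    shiftedNormSq a n = 0 ↔ ∀ i, (n i : ℝ) + a i / 2 = 0 := by
  rw [shiftedNormSq, Finset.sum_eq_zero_iff_of_nonneg fun _ _ => sq_nonneg _]
  simp only [Finset.mem_univ, true_imp_iff, sq_eq_zero_iff]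

theorem norm_thetaPhase (κ : Char) (n : Fin 2 → ℤ) : ‖thetaPhase κ n‖ = 1 :=
  Complex.norm_exp_ofReal_mul_I _

theorem thetaPhase_eq_one_of_shiftedNormSq_eq_zero {κ : Char} {n : Fin 2 → ℤ}
    (h : shiftedNormSq κ.1 n = 0) : thetaPhase κ n = 1 := by
  simp [thetaPhase, shiftedNormSq_eq_zero_iff.mp h]

theorem summable_exp_neg_pi_mul_shiftedNormSq (a : Fin 2 → ℤ) :
    Summable fun n => Real.exp (-(Real.pi * shiftedNormSq a n)) := by
  have hgauss (x : ℝ) : Summable fun m : ℤ => Real.exp (-Real.pi * (m + x) ^ 2 * 1) :=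
    (HurwitzZeta.hasSum_int_evenKernel x one_pos).summable
  have hprod := (hgauss (a 0 / 2)).mul_of_nonneg (hgauss (a 1 / 2))
    (fun _ => (Real.exp_pos _).le) (fun _ => (Real.exp_pos _).le)
  refine ((finTwoArrowEquiv ℤ).summable_iff.mpr hprod).congr fun n => ?_
  rw [Function.comp_apply, ← Real.exp_add]
  congr 1
  change -Real.pi * (n 0 + a 0 / 2) ^ 2 * 1 + -Real.pi * (n 1 + a 1 / 2) ^ 2 * 1 = _
  rw [shiftedNormSq, Fin.sum_univ_two]
  ring

/-- The matrix `i s · 1`, which lies in the Siegel upper half space for `0 < s`. -/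
noncomputable def imaginaryScalar (s : ℝ) : Mat2 := ((s : ℂ) * Complex.I) • 1

theorem imaginaryScalar_mem_SiegelH2 {s : ℝ} (hs : 0 < s) : imaginaryScalar s ∈ SiegelH2 := by
  have him : (imaginaryScalar s).map Complex.im = Matrix.diagonal fun _ => s := by
    ext i j
    by_cases h : i = j <;> simp [imaginaryScalar, h]
  refine ⟨by simp [imaginaryScalar], ?_⟩
  rw [him]
  exact Matrix.PosDef.diagonal fun _ => hs

theorem two_smul_imaginaryScalar (s : ℝ) :
    (2 : ℂ) • imaginaryScalar s = imaginaryScalar (2 * s) := by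
  simp [imaginaryScalar, smul_smul, mul_assoc]

theorem theta_imaginaryScalar (κ : Char) (s : ℝ) :
    theta κ (imaginaryScalar s) =
      ∑' n, Real.exp (-(Real.pi * shiftedNormSq κ.1 n * s)) • thetaPhase κ n := by
  refine tsum_congr fun n => ?_
  rw [Complex.real_smul, Complex.ofReal_exp, thetaPhase, ← Complex.exp_add]
  congr 1
  simp only [imaginaryScalar, shiftedNormSq, Fin.sum_univ_two, Matrix.smul_apply,
    Matrix.one_apply, smul_eq_mul]
  push_cast
  simp only [mul_one, mul_zero, zero_mul, add_zero, zero_add]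
  linear_combination (Real.pi * s * (((n 0 : ℂ) + κ.1 0 / 2) ^ 2 + (n 1 + κ.1 1 / 2) ^ 2)) *
    Complex.I_sq

theorem tendsto_theta_imaginaryScalar_tsum (κ : Char) :
    Tendsto (fun s => theta κ (imaginaryScalar s)) atTop
      (𝓝 (∑' n, if shiftedNormSq κ.1 n = 0 then 1 else 0)) := by
  have hlim := tendsto_tsum_exp_neg_mul_smul (w := thetaPhase κ)
    (fun n => mul_nonneg Real.pi_pos.le (shiftedNormSq_nonneg κ.1 n))
    (by simpa only [norm_thetaPhase, mul_one] using summable_exp_neg_pi_mul_shiftedNormSq κ.1)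
  simp only [← theta_imaginaryScalar, mul_eq_zero, Real.pi_ne_zero, false_or] at hlim
  rwa [tsum_congr fun n => ite_congr rfl thetaPhase_eq_one_of_shiftedNormSq_eq_zero
    fun _ => rfl] at hlim

/-- The upper row of `[a;b]` is even, that is, `a/2` is a lattice vector. These are the
characteristics whose theta constants do not vanish at the cusp. -/
def HasEvenTop (κ : Char) : Prop := ∀ i, Even (κ.1 i)

theorem hasEvenTop_of_shiftedNormSq_eq_zero {κ : Char} {n : Fin 2 → ℤ}
    (h : shiftedNormSq κ.1 n = 0) : HasEvenTop κ := fun i => by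
  have hi : (κ.1 i : ℝ) = -n i + -n i := by linarith [shiftedNormSq_eq_zero_iff.mp h i]
  exact ⟨-n i, mod_cast hi⟩

theorem HasEvenTop.exists_shiftedNormSq_eq_zero_iff {κ : Char} (h : HasEvenTop κ) :
    ∃ m, ∀ n, shiftedNormSq κ.1 n = 0 ↔ n = m := by
  choose m hm using h
  refine ⟨-m, fun n => ?_⟩
  rw [shiftedNormSq_eq_zero_iff, funext_iff]
  refine forall_congr' fun i => ?_
  have hhalf : (n i : ℝ) + κ.1 i / 2 = (n i + m i : ℤ) := by
    rw [hm]
    push_cast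
    ring
  rw [hhalf, Int.cast_eq_zero, Pi.neg_apply, eq_neg_iff_add_eq_zero]

open Classical in
/-- The limit of `θ[a;b](i s · 1)` as `s → ∞`. -/
noncomputable def thetaCuspValue (κ : Char) : ℂ := if HasEvenTop κ then 1 else 0

theorem tsum_ite_shiftedNormSq_eq_zero (κ : Char) :
    (∑' n, if shiftedNormSq κ.1 n = 0 then (1 : ℂ) else 0) = thetaCuspValue κ := by
  rw [thetaCuspValue]
  split_ifs with h
  · obtain ⟨m, hm⟩ := h.exists_shiftedNormSq_eq_zero_iff
    simp only [hm, tsum_ite_eq]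
  · have hne (n : Fin 2 → ℤ) : shiftedNormSq κ.1 n ≠ 0 :=
      mt hasEvenTop_of_shiftedNormSq_eq_zero h
    simp only [hne, if_false, tsum_zero]

theorem tendsto_theta_imaginaryScalar (κ : Char) :
    Tendsto (fun s => theta κ (imaginaryScalar s)) atTop (𝓝 (thetaCuspValue κ)) :=
  tsum_ite_shiftedNormSq_eq_zero κ ▸ tendsto_theta_imaginaryScalar_tsum κ

theorem tendsto_Θf_imaginaryScalar (ε : Fin 2 → ℤ) :
    Tendsto (fun s => Θf ε (imaginaryScalar s)) atTop (𝓝 (thetaCuspValue (ε, ![0, 0]))) := by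
  simp only [Θf, two_smul_imaginaryScalar]
  exact (tendsto_theta_imaginaryScalar _).comp (tendsto_id.const_mul_atTop two_pos)

theorem tendsto_Ψ6_imaginaryScalar : Tendsto (fun s => Ψ6 (imaginaryScalar s)) atTop (𝓝 1) := by
  have h00 : Tendsto (fun s => Θf ![0, 0] (imaginaryScalar s)) atTop (𝓝 1) := by
    simpa [thetaCuspValue, HasEvenTop] using tendsto_Θf_imaginaryScalar ![0, 0]
  have h01 : Tendsto (fun s => Θf ![0, 1] (imaginaryScalar s)) atTop (𝓝 0) := by
    simpa [thetaCuspValue, HasEvenTop] using tendsto_Θf_imaginaryScalar ![0, 1]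
  have h10 : Tendsto (fun s => Θf ![1, 0] (imaginaryScalar s)) atTop (𝓝 0) := by
    simpa [thetaCuspValue, HasEvenTop] using tendsto_Θf_imaginaryScalar ![1, 0]
  have h11 : Tendsto (fun s => Θf ![1, 1] (imaginaryScalar s)) atTop (𝓝 0) := by
    simpa [thetaCuspValue, HasEvenTop] using tendsto_Θf_imaginaryScalar ![1, 1]
  have hP0 : Tendsto (fun s => P0 (imaginaryScalar s)) atTop (𝓝 1) := by
    simpa [P0] using (((h00.pow 4).add (h01.pow 4)).add (h10.pow 4)).add (h11.pow 4)
  have hP1 : Tendsto (fun s => P1 (imaginaryScalar s)) atTop (𝓝 0) := by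
    simpa [P1] using (((h00.pow 2).mul (h01.pow 2)).add ((h10.pow 2).mul (h11.pow 2))).const_mul 2
  have hP2 : Tendsto (fun s => P2 (imaginaryScalar s)) atTop (𝓝 0) := by
    simpa [P2] using (((h00.pow 2).mul (h10.pow 2)).add ((h01.pow 2).mul (h11.pow 2))).const_mul 2
  have hP3 : Tendsto (fun s => P3 (imaginaryScalar s)) atTop (𝓝 0) := by
    simpa [P3] using (((h00.pow 2).mul (h11.pow 2)).add ((h01.pow 2).mul (h10.pow 2))).const_mul 2
  have hP4 : Tendsto (fun s => P4 (imaginaryScalar s)) atTop (𝓝 0) := by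
    simpa [P4] using (((h00.mul h01).mul h10).mul h11).const_mul 4
  have hquad := (((hP1.pow 2).add (hP2.pow 2)).add (hP3.pow 2)).sub ((hP4.pow 2).const_mul 4)
  simpa [Ψ6] using ((hP0.pow 3).sub ((hP0.const_mul 9).mul hquad)).add
    (((hP1.mul hP2).mul hP3).const_mul 54)

theorem HasEvenTop.addChar {κ μ : Char} (hκ : HasEvenTop κ) (hμ : HasEvenTop μ) :
    HasEvenTop (addChar κ μ) := fun i => by
  simp [TwoLoop.addChar, Int.even_iff.mp ((hκ i).add (hμ i))]

theorem HasEvenTop.not_isOddChar {κ : Char} (h : HasEvenTop κ) : ¬IsOddChar κ := by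
  rw [IsOddChar, ← Int.odd_iff, Int.not_odd_iff_even]
  exact Finset.even_sum _ fun i _ => (h i).mul_right _

/-- The filter on the Siegel upper half space describing the approach to the cusp along the
points `i s · 1`, `s → ∞`. -/
noncomputable def scalarCusp : Filter SiegelH2 :=
  map (fun s : Set.Ioi (0 : ℝ) => ⟨imaginaryScalar s, imaginaryScalar_mem_SiegelH2 s.2⟩) atTop

instance : scalarCusp.NeBot := map_neBot

theorem tendsto_scalarCusp_iff {X : Type*} {f : Mat2 → X} {l : Filter X} :
    Tendsto (fun τ : SiegelH2 => f τ) scalarCusp l ↔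
      Tendsto (fun s => f (imaginaryScalar s)) atTop l := by
  rw [scalarCusp, tendsto_map'_iff]
  exact tendsto_comp_val_Ioi_atTop (f := fun s => f (imaginaryScalar s))

theorem zeroAtFilter_theta_pow_mul_theta_pow_mul_theta_pow {κ μ ν : Char} {m : ℕ} (hm : m ≠ 0)
    (h : ¬(HasEvenTop κ ∧ HasEvenTop μ ∧ HasEvenTop ν)) :
    ZeroAtFilter scalarCusp
      fun τ : SiegelH2 => theta κ τ ^ m * theta μ τ ^ m * theta ν τ ^ m := by
  have hzero : thetaCuspValue κ ^ m * thetaCuspValue μ ^ m * thetaCuspValue ν ^ m = 0 := by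
    simp only [thetaCuspValue]
    split_ifs <;> simp_all
  have hpow (κ : Char) := (tendsto_theta_imaginaryScalar κ).pow m
  have hlim := ((hpow κ).mul (hpow μ)).mul (hpow ν)
  rw [hzero] at hlim
  exact (tendsto_scalarCusp_iff
    (f := fun τ => theta κ τ ^ m * theta μ τ ^ m * theta ν τ ^ m)).mpr hlim

theorem statement13_general :
    (fun τ : SiegelH2 => Ψ6 τ.1) ∉ Submodule.span ℂ
      {g : SiegelH2 → ℂ | ∃ κ μ ν : Char, ¬(HasEvenTop κ ∧ HasEvenTop μ ∧ HasEvenTop ν) ∧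
        g = fun τ : SiegelH2 => theta κ τ.1 ^ 4 * theta μ τ.1 ^ 4 * theta ν τ.1 ^ 4} := by
  intro hmem
  have hzero : ZeroAtFilter scalarCusp fun τ : SiegelH2 => Ψ6 τ := by
    refine Submodule.span_le (p := zeroAtFilterSubmodule ℂ scalarCusp).mpr ?_ hmem
    rintro _ ⟨κ, μ, ν, h, rfl⟩
    exact zeroAtFilter_theta_pow_mul_theta_pow_mul_theta_pow four_ne_zero h
  have hone : Tendsto (fun τ : SiegelH2 => Ψ6 τ) scalarCusp (𝓝 1) :=
    tendsto_scalarCusp_iff.mpr tendsto_Ψ6_imaginaryScalar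
  exact one_ne_zero (tendsto_nhds_unique hone hzero)

/-- `Ψ₆` is not in the span of the products `θ⁴[δᵢ]θ⁴[δⱼ]θ⁴[δₖ]` with
`δᵢ+δⱼ+δₖ` an odd characteristic. -/
theorem statement13 :
    (fun τ : SiegelH2 => Ψ6 τ.1) ∉ Submodule.span ℂ
      {g : SiegelH2 → ℂ | ∃ i j k : Fin 10,
        IsOddChar (addChar (addChar (δev i) (δev j)) (δev k)) ∧
        g = fun τ : SiegelH2 =>
          theta (δev i) τ.1 ^ 4 * theta (δev j) τ.1 ^ 4 * theta (δev k) τ.1 ^ 4} := by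
  refine fun hmem => statement13_general (Submodule.span_mono ?_ hmem)
  rintro _ ⟨i, j, k, hodd, rfl⟩
  exact ⟨_, _, _, fun ⟨hi, hj, hk⟩ => ((hi.addChar hj).addChar hk).not_isOddChar hodd, rfl⟩

end TwoLoop
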